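/- arXiv:2009.04997 — 3 statements merged into one kernel-verified Lean document; each statement's English description precedes it below -/
import Mathlib

section
/- If x and y are two distinct elements of the binary tetrahedral group T*₂₄ with ‖x − y‖ = 1 (that is, x and y are the endpoints of an edge of the regular 24-cell whose vertex set is T*₂₄), then x and y lie in different left cosets of Q₈ = {±1, ±i, ±j, ±k} in T*₂₄, i.e. x⁻¹·y ∉ Q₈. Hence the partition of T*₂₄ into the three cosets of Q₈ is a proper 3-colouring of the facet adjacency graph of the 24-cell. -/
/-- The imaginary unit `i` of the real quaternions. -/
def qi : Quaternion ℝ := ⟨0, 1, 0, 0⟩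
/-- The imaginary unit `j` of the real quaternions. -/
def qj : Quaternion ℝ := ⟨0, 0, 1, 0⟩
/-- The imaginary unit `k` of the real quaternions. -/
def qk : Quaternion ℝ := ⟨0, 0, 0, 1⟩

/-- The quaternion group `Q₈ = {±1, ±i, ±j, ±k}`. -/
def Q8 : Set (Quaternion ℝ) := {1, -1, qi, -qi, qj, -qj, qk, -qk}

/-- The binary tetrahedral group `T*₂₄` as a set of real quaternions. -/
def T24 : Set (Quaternion ℝ) :=
  Q8 ∪
    {x | ∃ e₀ e₁ e₂ e₃ : ℝ, (e₀ = 1 ∨ e₀ = -1) ∧ (e₁ = 1 ∨ e₁ = -1) ∧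
      (e₂ = 1 ∨ e₂ = -1) ∧ (e₃ = 1 ∨ e₃ = -1) ∧
      x = ((e₀ : Quaternion ℝ) + (e₁ : Quaternion ℝ) * qi + (e₂ : Quaternion ℝ) * qj +
        (e₃ : Quaternion ℝ) * qk) / 2}

/-!
Left multiplication by `x` scales all distances by `‖x‖`, so `‖x - y‖ = ‖x‖` forces `q = x⁻¹ * y`
to lie at distance `1` from `1`. For a unit quaternion, `‖1 - q‖² = 2 - 2 re q`, so this means
`re q = 1 / 2`, whereas the elements of `Q₈` have real part `0` or `±1`.
-/

open scoped Quaternion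

@[simp]
theorem qi_coords : qi.re = 0 ∧ qi.imI = 1 ∧ qi.imJ = 0 ∧ qi.imK = 0 :=
  ⟨rfl, rfl, rfl, rfl⟩

@[simp]
theorem qj_coords : qj.re = 0 ∧ qj.imI = 0 ∧ qj.imJ = 1 ∧ qj.imK = 0 :=
  ⟨rfl, rfl, rfl, rfl⟩

@[simp]
theorem qk_coords : qk.re = 0 ∧ qk.imI = 0 ∧ qk.imJ = 0 ∧ qk.imK = 1 :=
  ⟨rfl, rfl, rfl, rfl⟩

theorem norm_sub_eq_norm_mul_norm_one_sub_inv_mul {𝕜 : Type*} [NormedDivisionRing 𝕜] {x : 𝕜}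
    (hx : x ≠ 0) (y : 𝕜) : ‖x - y‖ = ‖x‖ * ‖1 - x⁻¹ * y‖ := by
  rw [← norm_mul, mul_one_sub, mul_inv_cancel_left₀ hx]

theorem quaternion_norm_sq_eq (q : ℍ[ℝ]) :
    ‖q‖ ^ 2 = q.re ^ 2 + q.imI ^ 2 + q.imJ ^ 2 + q.imK ^ 2 := by
  rw [sq, ← Quaternion.normSq_eq_norm_mul_self, Quaternion.normSq_def']

theorem quaternion_norm_one_sub_sq (q : ℍ[ℝ]) : ‖1 - q‖ ^ 2 = 1 - 2 * q.re + ‖q‖ ^ 2 := by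
  simp [norm_sub_sq_real, Quaternion.inner_def]

theorem norm_sq_coe_add_coe_mul_units (a b c d : ℝ) :
    ‖(a : ℍ[ℝ]) + (b : ℍ[ℝ]) * qi + (c : ℍ[ℝ]) * qj + (d : ℍ[ℝ]) * qk‖ ^ 2 =
      a ^ 2 + b ^ 2 + c ^ 2 + d ^ 2 := by
  simp [quaternion_norm_sq_eq]

theorem norm_eq_one_of_mem_Q8 {q : ℍ[ℝ]} (hq : q ∈ Q8) : ‖q‖ = 1 := by
  rw [← sq_eq_sq₀ (norm_nonneg q) zero_le_one, quaternion_norm_sq_eq]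
  rcases hq with rfl | rfl | rfl | rfl | rfl | rfl | rfl | rfl <;> simp

theorem re_mem_of_mem_Q8 {q : ℍ[ℝ]} (hq : q ∈ Q8) : q.re ∈ ({-1, 0, 1} : Set ℝ) := by
  rcases hq with rfl | rfl | rfl | rfl | rfl | rfl | rfl | rfl <;> simp

theorem norm_one_sub_ne_one_of_mem_Q8 {q : ℍ[ℝ]} (hq : q ∈ Q8) : ‖1 - q‖ ≠ 1 := by
  intro hdist
  have hre : q.re = 1 / 2 := by
    have hlaw := quaternion_norm_one_sub_sq q
    rw [hdist, norm_eq_one_of_mem_Q8 hq] at hlaw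
    linarith
  have hmem := re_mem_of_mem_Q8 hq
  norm_num [hre] at hmem

theorem norm_eq_one_of_mem_T24 {x : ℍ[ℝ]} (hx : x ∈ T24) : ‖x‖ = 1 := by
  rcases hx with hx | ⟨e₀, e₁, e₂, e₃, h₀, h₁, h₂, h₃, rfl⟩
  · exact norm_eq_one_of_mem_Q8 hx
  · have hnumerator :
        ‖(e₀ : ℍ[ℝ]) + (e₁ : ℍ[ℝ]) * qi + (e₂ : ℍ[ℝ]) * qj + (e₃ : ℍ[ℝ]) * qk‖ = 2 := by
      rw [← sq_eq_sq₀ (norm_nonneg _) zero_le_two, norm_sq_coe_add_coe_mul_units,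
        sq_eq_one_iff.mpr h₀, sq_eq_one_iff.mpr h₁, sq_eq_one_iff.mpr h₂, sq_eq_one_iff.mpr h₃]
      norm_num
    have htwo : ‖(2 : ℍ[ℝ])‖ = 2 := (Quaternion.norm_coe 2).trans Real.norm_two
    rw [norm_div, hnumerator, htwo, div_self two_ne_zero]

theorem adjacent_vertices_in_different_Q8_cosets_general {x y : ℍ[ℝ]} (hx : x ≠ 0)
    (hxy : ‖x - y‖ = ‖x‖) : x⁻¹ * y ∉ Q8 := by
  intro hq
  rw [norm_sub_eq_norm_mul_norm_one_sub_inv_mul hx,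
    mul_eq_left₀ (norm_ne_zero_iff.mpr hx)] at hxy
  exact norm_one_sub_ne_one_of_mem_Q8 hq hxy

/-- If `x` and `y` are distinct elements of `T*₂₄` at Euclidean distance `1` (i.e. endpoints
of an edge of the regular 24-cell with vertex set `T*₂₄`), then they lie in different left
cosets of `Q₈` in `T*₂₄`: `x⁻¹ * y ∉ Q₈`.  Hence the three cosets of `Q₈` form a proper
3-colouring of the facet adjacency graph of the 24-cell. -/
theorem adjacent_vertices_in_different_Q8_cosets :
    ∀ x ∈ T24, ∀ y ∈ T24, x ≠ y → ‖x - y‖ = 1 → x⁻¹ * y ∉ Q8 := by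
  intro x hx y _ _ hxy
  have hnorm := norm_eq_one_of_mem_T24 hx
  exact adjacent_vertices_in_different_Q8_cosets_general
    (norm_ne_zero_iff.mp (hnorm ▸ one_ne_zero)) (hxy.trans hnorm.symm)
end

section
/- Let A be the 5×5 real matrix with rows (1/2, −1/2, 1/2, 1/2, 0), (1/2, 1/2, −1/2, 1/2, 0), (1/2, −1/2, −1/2, −1/2, 0), (1/2, 1/2, 1/2, −1/2, 0), (0, 0, 0, 0, 1), and let B be the 5×5 real matrix with rows (−7/2, 3/2, 3/2, 3/2, 3√2), (−3/2, 1/2, 1/2, −1/2, √2), (3/2, 1/2, −1/2, −1/2, −√2), (3/2, −1/2, 1/2, −1/2, −√2), (−3√2, √2, √2, √2, 5). Then A and B are invertible and satisfy the relation A⁻²·B⁻²·A·B⁻²·A⁻²·B = Id. Consequently there exists a group homomorphism Φ from the group G presented as ⟨a, b | a⁻²b⁻²ab⁻²a⁻²b⟩ to the group of invertible 5×5 real matrices with Φ(a) = A and Φ(b) = B. -/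
open Matrix

/-- The matrix `Φ(a)` of the holonomy representation of `π₁(m036)`. -/
noncomputable def Amat : Matrix (Fin 5) (Fin 5) ℝ :=
  !![1/2, -1/2, 1/2, 1/2, 0;
     1/2, 1/2, -1/2, 1/2, 0;
     1/2, -1/2, -1/2, -1/2, 0;
     1/2, 1/2, 1/2, -1/2, 0;
     0, 0, 0, 0, 1]

/-- The matrix `Φ(b)` of the holonomy representation of `π₁(m036)`. -/
noncomputable def Bmat : Matrix (Fin 5) (Fin 5) ℝ :=
  !![-7/2, 3/2, 3/2, 3/2, 3 * Real.sqrt 2;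
     -3/2, 1/2, 1/2, -1/2, Real.sqrt 2;
     3/2, 1/2, -1/2, -1/2, -Real.sqrt 2;
     3/2, -1/2, 1/2, -1/2, -Real.sqrt 2;
     -3 * Real.sqrt 2, Real.sqrt 2, Real.sqrt 2, Real.sqrt 2, 5]

/-- The relator `a⁻²b⁻²ab⁻²a⁻²b` of the presentation
`⟨a, b | a⁻²b⁻²ab⁻²a⁻²b⟩` of `π₁(m036)`, as an element of the free group on two
generators (`0` playing the role of `a` and `1` that of `b`). -/
def m036Relator : FreeGroup (Fin 2) :=
  (FreeGroup.of 0)⁻¹ ^ 2 * (FreeGroup.of 1)⁻¹ ^ 2 * FreeGroup.of 0 *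
    (FreeGroup.of 1)⁻¹ ^ 2 * (FreeGroup.of 0)⁻¹ ^ 2 * FreeGroup.of 1

/-- The group `G = ⟨a, b | a⁻²b⁻²ab⁻²a⁻²b⟩`, i.e. the fundamental group of the census
manifold `m036`. -/
def m036Group : Type := PresentedGroup ({m036Relator} : Set (FreeGroup (Fin 2)))

noncomputable instance : Group m036Group :=
  inferInstanceAs (Group (PresentedGroup ({m036Relator} : Set (FreeGroup (Fin 2)))))

/-!
The relator splits as `((b²a²)⁻¹ a) · ((a²b²)⁻¹ b)`. The matrices `A` and `B` preserve the
Lorentzian form `diag(1, 1, 1, 1, -1)`. If `ρ` and `σ` are the reflections in `e = (0, 0, 0, 1, 0)`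
and `v = (1, -1, 0, -1, √2)`, then `B²A² = Aρσ` and `A²B² = Bσρ`, so the two factors are mapped to
`σρ` and `ρσ`, which cancel. Since `⟨v, e⟩ = -1`, these products of reflections are parabolic.
-/

section BilinearForm

variable {n R : Type*} [Fintype n] [DecidableEq n] [CommRing R]

theorem isUnit_of_transpose_mul_mul_eq {J M : Matrix n n R} (hJ : IsUnit J)
    (hM : Mᵀ * J * M = J) : IsUnit M :=
  isUnit_of_mul_isUnit_right (hM.symm ▸ hJ)

/-- The matrix of `x ↦ x - 2 ⟨v, x⟩ v`, where `⟨x, y⟩ = xᵀ J y`. It is the reflection in `v` when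
`J` is symmetric and `⟨v, v⟩ = 1`. -/
def formReflection (J : Matrix n n R) (v : n → R) : Matrix n n R :=
  1 - 2 * vecMulVec v (v ᵥ* J)

theorem formReflection_apply (J : Matrix n n R) (v : n → R) (i j : n) :
    formReflection J v i j = (1 : Matrix n n R) i j - 2 * (v i * (v ᵥ* J) j) := by
  rw [formReflection, Matrix.sub_apply, two_mul, Matrix.add_apply, vecMulVec_apply, two_mul]

theorem formReflection_mul_self {J : Matrix n n R} {v : n → R} (hv : v ᵥ* J ⬝ᵥ v = 1) :
    formReflection J v * formReflection J v = 1 := by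
  have idempotent : vecMulVec v (v ᵥ* J) * vecMulVec v (v ᵥ* J) = vecMulVec v (v ᵥ* J) := by
    rw [vecMulVec_mul_vecMulVec, hv, one_smul]
  calc formReflection J v * formReflection J v
      = 1 - 4 * vecMulVec v (v ᵥ* J) + 4 * (vecMulVec v (v ᵥ* J) * vecMulVec v (v ᵥ* J)) := by
        rw [formReflection]; noncomm_ring
    _ = 1 := by rw [idempotent, sub_add_cancel]

end BilinearForm

section Group

variable {H : Type*} [Group H]

theorem m036_relation_of_sq_mul_sq {a b c : H} (hab : b ^ 2 * a ^ 2 = a * c)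
    (hba : a ^ 2 * b ^ 2 = b * c⁻¹) :
    a⁻¹ ^ 2 * b⁻¹ ^ 2 * a * b⁻¹ ^ 2 * a⁻¹ ^ 2 * b = 1 :=
  calc a⁻¹ ^ 2 * b⁻¹ ^ 2 * a * b⁻¹ ^ 2 * a⁻¹ ^ 2 * b
      = (b ^ 2 * a ^ 2)⁻¹ * a * ((a ^ 2 * b ^ 2)⁻¹ * b) := by group
    _ = 1 := by rw [hab, hba]; group

theorem exists_hom_m036Group {a b : H}
    (h : a⁻¹ ^ 2 * b⁻¹ ^ 2 * a * b⁻¹ ^ 2 * a⁻¹ ^ 2 * b = 1) :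
    ∃ Φ : m036Group →* H, Φ (PresentedGroup.of 0) = a ∧ Φ (PresentedGroup.of 1) = b := by
  have lift_relator : ∀ r ∈ ({m036Relator} : Set (FreeGroup (Fin 2))),
      FreeGroup.lift ![a, b] r = 1 := by
    rintro _ rfl
    simpa [m036Relator] using h
  exact ⟨PresentedGroup.toGroup lift_relator, PresentedGroup.toGroup.of lift_relator,
    PresentedGroup.toGroup.of lift_relator⟩

end Group

section Lorentz

/-- The Gram matrix of the form of signature `(4, 1)` defining the hyperboloid model of `ℍ⁴`,
with the timelike coordinate last. -/
def lorentzForm : Matrix (Fin 5) (Fin 5) ℝ :=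
  diagonal ![1, 1, 1, 1, -1]

theorem isUnit_lorentzForm : IsUnit lorentzForm := by
  simp [lorentzForm, isUnit_diagonal, Pi.isUnit_iff, Fin.forall_fin_succ]

theorem Amat_preserves_lorentzForm : Amatᵀ * lorentzForm * Amat = lorentzForm := by
  ext i j
  fin_cases i <;> fin_cases j <;>
    simp only [Amat, lorentzForm, mul_apply, transpose_apply, diagonal_apply, Fin.sum_univ_five,
      of_apply, cons_val', cons_val, cons_val_fin_one, Fin.zero_eta, Fin.mk_one,
      Fin.reduceFinMk] <;>
    grind

theorem Bmat_preserves_lorentzForm : Bmatᵀ * lorentzForm * Bmat = lorentzForm := by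
  ext i j
  fin_cases i <;> fin_cases j <;>
    simp only [Bmat, lorentzForm, mul_apply, transpose_apply, diagonal_apply, Fin.sum_univ_five,
      of_apply, cons_val', cons_val, cons_val_fin_one, Fin.zero_eta, Fin.mk_one,
      Fin.reduceFinMk] <;>
    grind

theorem isUnit_Amat : IsUnit Amat :=
  isUnit_of_transpose_mul_mul_eq isUnit_lorentzForm Amat_preserves_lorentzForm

theorem isUnit_Bmat : IsUnit Bmat :=
  isUnit_of_transpose_mul_mul_eq isUnit_lorentzForm Bmat_preserves_lorentzForm

/-- The reflection `ρ` in the spacelike unit vector `e = (0, 0, 0, 1, 0)`. -/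
def reflectionE : Matrix (Fin 5) (Fin 5) ℝ :=
  formReflection lorentzForm ![0, 0, 0, 1, 0]

/-- The reflection `σ` in the spacelike unit vector `v = (1, -1, 0, -1, √2)`. -/
noncomputable def reflectionV : Matrix (Fin 5) (Fin 5) ℝ :=
  formReflection lorentzForm ![1, -1, 0, -1, √2]

theorem reflectionE_mul_self : reflectionE * reflectionE = 1 :=
  formReflection_mul_self <| by
    simp [lorentzForm, vecMul_diagonal, dotProduct, Fin.sum_univ_five]

theorem reflectionV_mul_self : reflectionV * reflectionV = 1 :=
  formReflection_mul_self <| by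
    simp only [lorentzForm, vecMul_diagonal, dotProduct, Fin.sum_univ_five, cons_val]
    grind

/-- The parabolic isometry `ρσ` as an invertible matrix, with inverse `σρ`. -/
noncomputable def parabolicUnit : (Matrix (Fin 5) (Fin 5) ℝ)ˣ where
  val := reflectionE * reflectionV
  inv := reflectionV * reflectionE
  val_inv := by
    rw [mul_assoc, ← mul_assoc reflectionV, reflectionV_mul_self, one_mul, reflectionE_mul_self]
  inv_val := by
    rw [mul_assoc, ← mul_assoc reflectionE, reflectionE_mul_self, one_mul, reflectionV_mul_self]

theorem reflectionE_eq :
    reflectionE =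
      !![1, 0, 0, 0, 0;
         0, 1, 0, 0, 0;
         0, 0, 1, 0, 0;
         0, 0, 0, -1, 0;
         0, 0, 0, 0, 1] := by
  ext i j
  fin_cases i <;> fin_cases j <;>
    simp only [reflectionE, formReflection_apply, lorentzForm, vecMul_diagonal, one_apply,
      of_apply, cons_val', cons_val, cons_val_fin_one, Fin.zero_eta, Fin.mk_one,
      Fin.reduceFinMk] <;>
    grind

theorem reflectionV_eq :
    reflectionV =
      !![-1, 2, 0, 2, 2 * √2;
         2, -1, 0, -2, -2 * √2;
         0, 0, 1, 0, 0;
         2, -2, 0, -1, -2 * √2;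
         -2 * √2, 2 * √2, 0, 2 * √2, 5] := by
  ext i j
  fin_cases i <;> fin_cases j <;>
    simp only [reflectionV, formReflection_apply, lorentzForm, vecMul_diagonal, one_apply,
      of_apply, cons_val', cons_val, cons_val_fin_one, Fin.zero_eta, Fin.mk_one,
      Fin.reduceFinMk] <;>
    grind

theorem Amat_sq :
    Amat ^ 2 =
      !![1/2, -1/2, 1/2, -1/2, 0;
         1/2, 1/2, 1/2, 1/2, 0;
         -1/2, -1/2, 1/2, 1/2, 0;
         1/2, -1/2, -1/2, 1/2, 0;
         0, 0, 0, 0, 1] := by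
  ext i j
  fin_cases i <;> fin_cases j <;>
    simp only [sq, Amat, mul_apply, Fin.sum_univ_five, of_apply, cons_val', cons_val,
      cons_val_fin_one, Fin.zero_eta, Fin.mk_one, Fin.reduceFinMk] <;>
    grind

theorem Bmat_sq :
    Bmat ^ 2 =
      !![-7/2, 3/2, 3/2, -3/2, 3 * √2;
         -3/2, 1/2, -1/2, -1/2, √2;
         -3/2, 1/2, 1/2, 1/2, √2;
         3/2, 1/2, -1/2, 1/2, -√2;
         -3 * √2, √2, √2, -√2, 5] := by
  ext i j
  fin_cases i <;> fin_cases j <;>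
    simp only [sq, Bmat, mul_apply, Fin.sum_univ_five, of_apply, cons_val', cons_val,
      cons_val_fin_one, Fin.zero_eta, Fin.mk_one, Fin.reduceFinMk] <;>
    grind

theorem Bmat_sq_mul_Amat_sq :
    Bmat ^ 2 * Amat ^ 2 = Amat * (reflectionE * reflectionV) := by
  rw [Bmat_sq, Amat_sq, Amat, reflectionE_eq, reflectionV_eq]
  ext i j
  fin_cases i <;> fin_cases j <;>
    simp only [mul_apply, Fin.sum_univ_five, of_apply, cons_val', cons_val, cons_val_fin_one,
      Fin.zero_eta, Fin.mk_one, Fin.reduceFinMk] <;>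
    grind

theorem Amat_sq_mul_Bmat_sq :
    Amat ^ 2 * Bmat ^ 2 = Bmat * (reflectionV * reflectionE) := by
  rw [Bmat_sq, Amat_sq, Bmat, reflectionE_eq, reflectionV_eq]
  ext i j
  fin_cases i <;> fin_cases j <;>
    simp only [mul_apply, Fin.sum_univ_five, of_apply, cons_val', cons_val, cons_val_fin_one,
      Fin.zero_eta, Fin.mk_one, Fin.reduceFinMk] <;>
    grind

end Lorentz

/-- The matrices `A` and `B` are invertible and satisfy the relation
`A⁻²·B⁻²·A·B⁻²·A⁻²·B = Id`; consequently there is a group homomorphism `Φ` from the group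
`⟨a, b | a⁻²b⁻²ab⁻²a⁻²b⟩` to the group of invertible `5 × 5` real matrices with
`Φ(a) = A` and `Φ(b) = B`. -/
theorem holonomy_representation_well_defined :
    IsUnit Amat ∧ IsUnit Bmat ∧
    Amat⁻¹ ^ 2 * Bmat⁻¹ ^ 2 * Amat * Bmat⁻¹ ^ 2 * Amat⁻¹ ^ 2 * Bmat = 1 ∧
    ∃ Φ : m036Group →* (Matrix (Fin 5) (Fin 5) ℝ)ˣ,
      ((Φ (PresentedGroup.of 0) : (Matrix (Fin 5) (Fin 5) ℝ)ˣ) : Matrix (Fin 5) (Fin 5) ℝ)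
          = Amat ∧
      ((Φ (PresentedGroup.of 1) : (Matrix (Fin 5) (Fin 5) ℝ)ˣ) : Matrix (Fin 5) (Fin 5) ℝ)
          = Bmat := by
  obtain ⟨a, ha⟩ := isUnit_Amat
  obtain ⟨b, hb⟩ := isUnit_Bmat
  have hab : b ^ 2 * a ^ 2 = a * parabolicUnit := Units.ext <| by
    simpa only [Units.val_mul, Units.val_pow_eq_pow_val, parabolicUnit, ha, hb]
      using Bmat_sq_mul_Amat_sq
  have hba : a ^ 2 * b ^ 2 = b * parabolicUnit⁻¹ := Units.ext <| by
    simpa only [Units.val_mul, Units.val_pow_eq_pow_val, parabolicUnit, Units.inv_mk, ha, hb]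
      using Amat_sq_mul_Bmat_sq
  have relation := m036_relation_of_sq_mul_sq hab hba
  obtain ⟨Φ, hΦa, hΦb⟩ := exists_hom_m036Group relation
  refine ⟨isUnit_Amat, isUnit_Bmat, ?_, Φ, by rw [hΦa, ha], by rw [hΦb, hb]⟩
  simpa only [Units.val_mul, Units.val_pow_eq_pow_val, coe_units_inv, Units.val_one, ha, hb]
    using congrArg Units.val relation
end

section
/- Let G be the group with presentation ⟨a, b | a⁻²b⁻²ab⁻²a⁻²b⟩. Then the generator a has infinite order in G: aⁿ ≠ 1 for every nonzero integer n. -/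
theorem not_isOfFinOrder_presentedGroup_of {α G : Type*} [Group G] {rels : Set (FreeGroup α)}
    {f : α → G} (hf : ∀ r ∈ rels, FreeGroup.lift f r = 1) {x : α} (hx : ¬IsOfFinOrder (f x)) :
    ¬IsOfFinOrder (PresentedGroup.of x : PresentedGroup rels) := by
  intro hfin
  have himage := (PresentedGroup.toGroup hf).isOfFinOrder hfin
  rw [PresentedGroup.toGroup.of] at himage
  exact hx himage

theorem lift_m036Relator {G : Type*} [CommGroup G] (f : Fin 2 → G) :
    FreeGroup.lift f m036Relator = (f 0 * f 1) ^ (-3 : ℤ) := by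
  simp only [m036Relator, map_mul, map_pow, map_inv, FreeGroup.lift_apply_of]
  calc
    (f 0)⁻¹ ^ 2 * (f 1)⁻¹ ^ 2 * f 0 * (f 1)⁻¹ ^ 2 * (f 0)⁻¹ ^ 2 * f 1
        = ((f 0)⁻¹ ^ 2 * f 0 * (f 0)⁻¹ ^ 2) * ((f 1)⁻¹ ^ 2 * (f 1)⁻¹ ^ 2 * f 1) := by ac_rfl
    _ = f 0 ^ (-3 : ℤ) * f 1 ^ (-3 : ℤ) := by group
    _ = (f 0 * f 1) ^ (-3 : ℤ) := (mul_zpow _ _ _).symm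

/-- In the group `G = ⟨a, b | a⁻²b⁻²ab⁻²a⁻²b⟩` (the fundamental group of the census
manifold `m036`), the generator `a` has infinite order: `aⁿ ≠ 1` for every nonzero
integer `n`. -/
theorem m036_generator_a_infinite_order :
    ∀ n : ℤ, n ≠ 0 →
      (PresentedGroup.of (0 : Fin 2) :
          PresentedGroup ({m036Relator} : Set (FreeGroup (Fin 2)))) ^ n ≠ 1 := by
  let f : Fin 2 → Multiplicative ℤ := ![.ofAdd 1, .ofAdd (-1)]
  have hrel : ∀ r ∈ ({m036Relator} : Set (FreeGroup (Fin 2))), FreeGroup.lift f r = 1 := by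
    rintro _ rfl
    rw [lift_m036Relator, show f 0 * f 1 = 1 from rfl, one_zpow]
  have hf : ¬IsOfFinOrder (f 0) := not_isOfFinOrder_of_isMulTorsionFree (by decide)
  intro n hn hpow
  exact not_isOfFinOrder_presentedGroup_of hrel hf
    (isOfFinOrder_iff_zpow_eq_one.mpr ⟨n, hn, hpow⟩)
end
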